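/- Assume in addition that Im u(0) = 0. Then for all sufficiently small x > 0 one has ξ(x) ∉ (−∞,0], and lim_{x→0⁺} [ e^{−u(0)π/β} · ( β·ξ(x)/(2π) )^{−2π/β} − 1/x ] = u′(0)/(2(b+2)), where the complex power w^{−2π/β} is principal and u′(0) is the complex derivative of u at 0. Equivalently, 1/x = e^{−u(0)π/β}·(β·ξ(x)/(2π))^{−2π/β} − u′(0)/(2(b+2)) + o(1) as x → 0⁺. -/

import Mathlib

open Complex Real Set Filter

/-!
Along the positive ray `ξ(x) = ∫₀ˣ s ^ b e ^ {-u(s)/2} ds`. Expanding `e ^ {-u/2}` to first order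
at `0` and integrating against `s ^ b` gives
`(b + 1) ξ(x) = x ^ (b + 1) e ^ {-u(0)/2} N(x)` with
`N(x) = 1 - (b + 1) / (b + 2) * u'(0) / 2 * x + o(x)`. The exponent `-2π/β = -1/(b + 1)` turns
`x ^ (b + 1)` into `1 / x`, the factor `e ^ {-u(0)π/β}` cancels the constant, and what is left is
`(N(x) ^ {-1/(b + 1)} - 1) / x`, whose limit is the derivative of the power function at `1` times
the slope of `N`.
-/

open MeasureTheory Asymptotics
open scoped Topology

/-! ### Integrals against a power weight near zero -/

section RpowWeight

variable {E : Type*} [NormedAddCommGroup E]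

lemma tendsto_Ioc_smallSets_nhdsGT {α : Type*} [LinearOrder α] [TopologicalSpace α]
    [OrderTopology α] (a : α) :
    Tendsto (fun x => Ioc a x) (𝓝[>] a) (𝓝[>] a).smallSets :=
  Tendsto.Ioc (l₁ := 𝓝[≥] a) (tendsto_const_nhdsWithin self_mem_Ici)
    (tendsto_id.mono_left (nhdsWithin_mono a Ioi_subset_Ici_self))

lemma eventually_intervalIntegrable_of_integrableAtFilter {f : ℝ → E} {a : ℝ}
    {μ : Measure ℝ} (hf : IntegrableAtFilter f (𝓝[>] a) μ) :
    ∀ᶠ x in 𝓝[>] a, IntervalIntegrable f μ a x := by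
  filter_upwards [(tendsto_Ioc_smallSets_nhdsGT a).eventually hf.eventually, self_mem_nhdsWithin]
    with x hfx hx
  exact (intervalIntegrable_iff_integrableOn_Ioc_of_le hx.le).2 hfx

lemma integrableAtFilter_rpow_nhdsGT_zero {p : ℝ} (hp : -1 < p) :
    IntegrableAtFilter (fun s : ℝ => s ^ p) (𝓝[>] 0) :=
  ⟨Ioc 0 1, Ioc_mem_nhdsGT one_pos,
    (intervalIntegrable_iff_integrableOn_Ioc_of_le zero_le_one).1
      (intervalIntegral.intervalIntegrable_rpow' hp)⟩

lemma integral_zero_rpow {p : ℝ} (hp : -1 < p) (x : ℝ) :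
    ∫ s in (0 : ℝ)..x, s ^ p = x ^ (p + 1) / (p + 1) := by
  rw [integral_rpow (Or.inl hp), Real.zero_rpow (by linarith), sub_zero]

variable [NormedSpace ℝ E]

lemma intervalIntegrable_rpow_smul_const {p : ℝ} (hp : -1 < p) (x y : ℝ) (c : E) :
    IntervalIntegrable (fun s : ℝ => s ^ p • c) volume x y :=
  have hint := intervalIntegral.intervalIntegrable_rpow' hp
  ⟨hint.1.smul_const c, hint.2.smul_const c⟩

lemma isLittleO_integral_of_isLittleO_rpow {g : ℝ → E} {p : ℝ} (hp : -1 < p)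
    (hg : g =o[𝓝[>] 0] fun s => s ^ p) :
    (fun x => ∫ s in (0 : ℝ)..x, g s) =o[𝓝[>] 0] fun x => x ^ (p + 1) := by
  have hp' : 0 < p + 1 := by linarith
  refine isLittleO_iff.2 fun ε hε => ?_
  have hg' : ∀ᶠ s in 𝓝[>] (0 : ℝ), ‖g s‖ ≤ ε * (p + 1) * ‖s ^ p‖ := hg.def (by positivity)
  filter_upwards [(tendsto_Ioc_smallSets_nhdsGT 0).eventually
    (eventually_smallSets_forall.2 hg'), self_mem_nhdsWithin] with x hgx hx
  have hx : 0 < x := hx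
  calc ‖∫ s in (0 : ℝ)..x, g s‖
      ≤ ∫ s in (0 : ℝ)..x, ε * (p + 1) * s ^ p := by
        refine intervalIntegral.norm_integral_le_of_norm_le hx.le (.of_forall fun s hs => ?_)
          ((intervalIntegral.intervalIntegrable_rpow' hp).const_mul _)
        simpa only [Real.norm_of_nonneg (Real.rpow_nonneg hs.1.le p)] using hgx s hs
    _ = ε * ‖x ^ (p + 1)‖ := by
        rw [intervalIntegral.integral_const_mul, integral_zero_rpow hp,
          Real.norm_of_nonneg (by positivity)]
        field_simp

variable {f : ℝ → E} {b : ℝ}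

lemma integrableAtFilter_rpow_smul {l : E} (hb : -1 < b)
    (hmeas : StronglyMeasurableAtFilter f (𝓝[>] 0)) (hf : Tendsto f (𝓝[>] 0) (𝓝 l)) :
    IntegrableAtFilter (fun s => s ^ b • f s) (𝓝[>] 0) := by
  have hbound : (fun s => s ^ b • f s) =O[𝓝[>] 0] fun s => s ^ b := by
    simpa using (isBigO_refl (fun s : ℝ => s ^ b) (𝓝[>] 0)).smul (hf.isBigO_one ℝ)
  obtain ⟨t, ht, hft⟩ := hmeas
  have hweight : Measurable fun s : ℝ => s ^ b := by fun_prop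
  exact hbound.integrableAtFilter ⟨t, ht, hweight.aestronglyMeasurable.smul hft⟩
    (integrableAtFilter_rpow_nhdsGT_zero hb)

variable [CompleteSpace E] {f' : E}

lemma integral_rpow_smul_sub_affine {x : ℝ} (hb : -1 < b) (hx : 0 ≤ x)
    (hf : IntervalIntegrable (fun s => s ^ b • f s) volume 0 x) (c d : E) :
    ∫ s in (0 : ℝ)..x, s ^ b • (f s - c - s • d) =
      (∫ s in (0 : ℝ)..x, s ^ b • f s) - (x ^ (b + 1) / (b + 1)) • c
        - (x ^ (b + 2) / (b + 2)) • d := by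
  have hb' : -1 < b + 1 := by linarith
  have hc := intervalIntegrable_rpow_smul_const hb 0 x c
  have hd := intervalIntegrable_rpow_smul_const hb' 0 x d
  calc ∫ s in (0 : ℝ)..x, s ^ b • (f s - c - s • d)
      = ∫ s in (0 : ℝ)..x, (s ^ b • f s - s ^ b • c - s ^ (b + 1) • d) := by
        refine intervalIntegral.integral_congr_ae (.of_forall fun s hs => ?_)
        rw [uIoc_of_le hx] at hs
        rw [smul_sub, smul_sub, smul_smul, Real.rpow_add_one hs.1.ne']
    _ = _ := by
        rw [intervalIntegral.integral_sub (hf.sub hc) hd, intervalIntegral.integral_sub hf hc,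
          intervalIntegral.integral_smul_const, intervalIntegral.integral_smul_const,
          integral_zero_rpow hb, integral_zero_rpow hb', add_assoc, one_add_one_eq_two]

lemma isLittleO_integral_rpow_smul_sub (hb : -1 < b)
    (hmeas : StronglyMeasurableAtFilter f (𝓝[>] 0)) (hf : HasDerivWithinAt f f' (Ioi 0) 0) :
    (fun x => (∫ s in (0 : ℝ)..x, s ^ b • f s) - (x ^ (b + 1) / (b + 1)) • f 0
      - (x ^ (b + 2) / (b + 2)) • f') =o[𝓝[>] 0] fun x => x ^ (b + 2) := by
  have htaylor : (fun s => f s - f 0 - s • f') =o[𝓝[>] 0] fun s => s := by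
    simpa only [sub_zero] using hasDerivWithinAt_iff_isLittleO.1 hf
  have hremainder : (fun s => s ^ b • (f s - f 0 - s • f')) =o[𝓝[>] 0] fun s => s ^ (b + 1) := by
    refine ((isBigO_refl (fun s : ℝ => s ^ b) _).smul_isLittleO htaylor).congr' .rfl ?_
    filter_upwards [self_mem_nhdsWithin] with s hs
    rw [smul_eq_mul, Real.rpow_add_one (ne_of_gt hs)]
  have hintegral := isLittleO_integral_of_isLittleO_rpow (by linarith) hremainder
  rw [show b + 1 + 1 = b + 2 by ring] at hintegral
  refine hintegral.congr' ?_ .rfl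
  filter_upwards [eventually_intervalIntegrable_of_integrableAtFilter
    (integrableAtFilter_rpow_smul hb hmeas hf.continuousWithinAt.tendsto),
    self_mem_nhdsWithin] with x hint hx
  exact integral_rpow_smul_sub_affine hb (le_of_lt hx) hint _ _

lemma tendsto_slope_rpow_weighted_average (hb : -1 < b)
    (hmeas : StronglyMeasurableAtFilter f (𝓝[>] 0)) (hf : HasDerivWithinAt f f' (Ioi 0) 0) :
    Tendsto (fun x => x⁻¹ • (((b + 1) / x ^ (b + 1)) • (∫ s in (0 : ℝ)..x, s ^ b • f s) - f 0))
      (𝓝[>] 0) (𝓝 (((b + 1) / (b + 2)) • f')) := by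
  have hb1 : b + 1 ≠ 0 := by linarith
  have hb2 : b + 2 ≠ 0 := by linarith
  have hzero := (isLittleO_integral_rpow_smul_sub hb hmeas hf).tendsto_inv_smul_nhds_zero
  have hlim := (hzero.const_smul (b + 1)).add_const (((b + 1) / (b + 2)) • f')
  rw [smul_zero, zero_add] at hlim
  refine hlim.congr' ?_
  filter_upwards [self_mem_nhdsWithin] with x hx
  have hx : 0 < x := hx
  have hpow : x ^ (b + 1) ≠ 0 := (Real.rpow_pos_of_pos hx _).ne'
  rw [show b + 2 = b + 1 + 1 by ring] at hb2 ⊢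
  rw [Real.rpow_add_one hx.ne' (b + 1)]
  match_scalars <;> field_simp
  ring

end RpowWeight

/-! ### Complex powers and the principal branch -/

section Branch

lemma log_exp_mul {w z : ℂ} (hz : z ≠ 0) (h : w.im + z.arg ∈ Ioc (-π) π) :
    Complex.log (Complex.exp w * z) = w + Complex.log z := by
  have him : (w + Complex.log z).im = w.im + z.arg := by rw [Complex.add_im, Complex.log_im]
  rw [← him] at h
  rw [← Complex.log_exp h.1 h.2, Complex.exp_add, Complex.exp_log hz]

lemma exp_mul_mem_slitPlane {w z : ℂ} (hz : z ≠ 0) (h : w.im + z.arg ∈ Ioo (-π) π) :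
    Complex.exp w * z ∈ slitPlane := by
  refine mem_slitPlane_iff_arg.2 ⟨?_, mul_ne_zero (Complex.exp_ne_zero w) hz⟩
  rw [← Complex.log_im, log_exp_mul hz (Ioo_subset_Ioc_self h), Complex.add_im, Complex.log_im]
  exact h.2.ne

lemma exp_mul_cpow {w z : ℂ} (hz : z ≠ 0) (h : w.im + z.arg ∈ Ioc (-π) π) (p : ℂ) :
    (Complex.exp w * z) ^ p = Complex.exp (w * p) * z ^ p := by
  rw [Complex.cpow_def_of_ne_zero (mul_ne_zero (Complex.exp_ne_zero w) hz), log_exp_mul hz h,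
    Complex.cpow_def_of_ne_zero hz, ← Complex.exp_add, add_mul]

lemma ofReal_mul_mem_slitPlane_iff {r : ℝ} (hr : 0 < r) {z : ℂ} :
    (r : ℂ) * z ∈ slitPlane ↔ z ∈ slitPlane := by
  simp [Complex.mem_slitPlane_iff, hr, hr.ne']

lemma tendsto_slope_cpow_const {α : Type*} {l : Filter α} {c N : α → ℂ} {k : ℂ}
    (hN : Tendsto N l (𝓝 1)) (hslope : Tendsto (fun a => c a * (N a - 1)) l (𝓝 k)) (p : ℂ) :
    Tendsto (fun a => c a * (N a ^ p - 1)) l (𝓝 (p * k)) := by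
  have hderiv : HasDerivAt (fun z : ℂ => z ^ p) p 1 := by
    simpa using (hasDerivAt_id (1 : ℂ)).cpow_const (c := p) one_mem_slitPlane
  have hlim := (hasFDerivWithinAt_univ.2 hderiv.hasFDerivAt).lim (c := c)
    (tendsto_sub_nhds_zero_iff.2 hN) (by simp) hslope
  simpa [mul_comm p] using hlim

lemma eventually_add_arg_mem_Ioo {α : Type*} {l : Filter α} {N : α → ℂ} {θ : ℝ}
    (hθ : |θ| < π) (hN : Tendsto N l (𝓝 1)) : ∀ᶠ a in l, θ + (N a).arg ∈ Ioo (-π) π := by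
  have hlim := ((Complex.continuousAt_arg one_mem_slitPlane).tendsto.comp hN).const_add θ
  rw [Complex.arg_one, add_zero] at hlim
  exact hlim.eventually (isOpen_Ioo.mem_nhds (abs_lt.1 hθ))

end Branch

/-! ### The conical coordinate along the positive ray -/

/-- The distinguished conical coordinate `ξ` at the point `x` of the positive ray, where `v` is the
restriction of `u` to the ray. The substitution `s = t x` has been made, so that the integral is
over `[0, x]` and the power is a real one; `integral_eq_conicalCoordinate` recovers the integral
over `[0, 1]`. -/
noncomputable def conicalCoordinate (v : ℝ → ℂ) (b x : ℝ) : ℂ :=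
  ∫ s in (0 : ℝ)..x, s ^ b • Complex.exp (-v s / 2)

/-- The quotient of the conical coordinate `ξ(x)` by its leading term
`x ^ (b + 1) * exp (-v 0 / 2) / (b + 1)`. It tends to `1` as `x → 0⁺`, and its slope there gives the
constant term in the expansion of `1 / x`. -/
noncomputable def normalizedConicalCoordinate (v : ℝ → ℂ) (b x : ℝ) : ℂ :=
  ((b + 1) / x ^ (b + 1)) • conicalCoordinate v b x / Complex.exp (-v 0 / 2)

section ConicalCoordinate

variable {v : ℝ → ℂ} {v' : ℂ} {b x : ℝ}

lemma integral_eq_conicalCoordinate (v : ℝ → ℂ) (b : ℝ) (hx : 0 ≤ x) :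
    ∫ t in (0 : ℝ)..1, ((t : ℂ) * (x : ℂ)) ^ (b : ℂ) * Complex.exp (-v (t * x) / 2) * (x : ℂ) =
      conicalCoordinate v b x := by
  have hsubst := intervalIntegral.smul_integral_comp_mul_right (a := 0) (b := 1)
    (fun s : ℝ => s ^ b • Complex.exp (-v s / 2)) x
  rw [zero_mul, one_mul] at hsubst
  rw [conicalCoordinate, ← hsubst, ← intervalIntegral.integral_smul]
  refine intervalIntegral.integral_congr fun t ht => ?_
  rw [uIcc_of_le zero_le_one] at ht
  simp only [Complex.real_smul, Complex.ofReal_cpow (mul_nonneg ht.1 hx), Complex.ofReal_mul]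
  ring

lemma conicalCoordinate_eq (v : ℝ → ℂ) (hb : b + 1 ≠ 0) (hx : 0 < x) :
    conicalCoordinate v b x = (x ^ (b + 1) / (b + 1) : ℝ) *
      (Complex.exp (-v 0 / 2) * normalizedConicalCoordinate v b x) := by
  have hpow : x ^ (b + 1) ≠ 0 := (Real.rpow_pos_of_pos hx _).ne'
  rw [normalizedConicalCoordinate, mul_div_cancel₀ _ (Complex.exp_ne_zero _), ← Complex.real_smul,
    smul_smul, div_mul_div_cancel₀ hb, div_self hpow, one_smul]

lemma conicalCoordinate_mem_slitPlane (hb : 0 < b + 1) (hx : 0 < x)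
    (hne : normalizedConicalCoordinate v b x ≠ 0)
    (harg : (-v 0 / 2).im + (normalizedConicalCoordinate v b x).arg ∈ Ioo (-π) π) :
    conicalCoordinate v b x ∈ slitPlane := by
  rw [conicalCoordinate_eq v hb.ne' hx, ofReal_mul_mem_slitPlane_iff (by positivity)]
  exact exp_mul_mem_slitPlane hne harg

lemma add_one_mul_conicalCoordinate (v : ℝ → ℂ) (hb : b + 1 ≠ 0) (hx : 0 < x) :
    ((b + 1 : ℝ) : ℂ) * conicalCoordinate v b x =
      Complex.exp (((b + 1) * Real.log x : ℝ) - v 0 / 2) * normalizedConicalCoordinate v b x := by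
  rw [conicalCoordinate_eq v hb hx, ← mul_assoc, ← mul_assoc, ← Complex.ofReal_mul,
    mul_div_cancel₀ _ hb, sub_eq_add_neg, ← neg_div, Complex.exp_add, ← Complex.ofReal_exp,
    mul_comm (b + 1), ← Real.rpow_def_of_pos hx]

lemma exp_mul_conicalCoordinate_cpow (hb : b + 1 ≠ 0) (hx : 0 < x)
    (hne : normalizedConicalCoordinate v b x ≠ 0)
    (harg : (-v 0 / 2).im + (normalizedConicalCoordinate v b x).arg ∈ Ioc (-π) π) :
    Complex.exp (v 0 / 2 * (-(b + 1)⁻¹ : ℝ)) *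
        (((b + 1 : ℝ) : ℂ) * conicalCoordinate v b x) ^ ((-(b + 1)⁻¹ : ℝ) : ℂ) =
      (x : ℂ)⁻¹ * normalizedConicalCoordinate v b x ^ ((-(b + 1)⁻¹ : ℝ) : ℂ) := by
  have him : (((b + 1) * Real.log x : ℝ) - v 0 / 2).im = (-v 0 / 2).im := by
    rw [Complex.sub_im, Complex.ofReal_im, zero_sub, neg_div, Complex.neg_im]
  have hexponent : v 0 / 2 * (-(b + 1)⁻¹ : ℝ) +
      (((b + 1) * Real.log x : ℝ) - v 0 / 2) * (-(b + 1)⁻¹ : ℝ) = (-Real.log x : ℝ) := by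
    have hcancel : (b + 1) * Real.log x * -(b + 1)⁻¹ = -Real.log x := by field_simp
    rw [← add_mul, add_sub_cancel, ← Complex.ofReal_mul, hcancel]
  rw [add_one_mul_conicalCoordinate v hb hx, exp_mul_cpow hne (him ▸ harg), ← mul_assoc,
    ← Complex.exp_add, hexponent, ← Complex.ofReal_exp, Real.exp_neg, Real.exp_log hx,
    Complex.ofReal_inv]

lemma tendsto_slope_normalizedConicalCoordinate (hb : -1 < b)
    (hmeas : StronglyMeasurableAtFilter v (𝓝[>] 0)) (hv : HasDerivWithinAt v v' (Ioi 0) 0) :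
    Tendsto (fun x : ℝ => (x : ℂ)⁻¹ * (normalizedConicalCoordinate v b x - 1)) (𝓝[>] 0)
      (𝓝 (-(((b + 1) / (b + 2) : ℝ) * (v' / 2)))) := by
  have hderiv : HasDerivWithinAt (fun s => Complex.exp (-v s / 2))
      (Complex.exp (-v 0 / 2) * (-v' / 2)) (Ioi 0) 0 := (hv.neg.div_const 2).cexp
  have hmeas' : StronglyMeasurableAtFilter (fun s => Complex.exp (-v s / 2)) (𝓝[>] 0) := by
    obtain ⟨t, ht, hvt⟩ := hmeas
    have hcont : Continuous fun z : ℂ => Complex.exp (-z / 2) := by fun_prop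
    exact ⟨t, ht, hcont.comp_aestronglyMeasurable hvt⟩
  have hlim := (tendsto_slope_rpow_weighted_average hb hmeas' hderiv).div_const
    (Complex.exp (-v 0 / 2))
  convert! hlim using 2
  · rw [normalizedConicalCoordinate, conicalCoordinate, Complex.real_smul, Complex.real_smul,
      Complex.ofReal_inv]
    field_simp
  · rw [Complex.real_smul]
    field_simp

lemma tendsto_normalizedConicalCoordinate (hb : -1 < b)
    (hmeas : StronglyMeasurableAtFilter v (𝓝[>] 0)) (hv : HasDerivWithinAt v v' (Ioi 0) 0) :
    Tendsto (normalizedConicalCoordinate v b) (𝓝[>] 0) (𝓝 1) := by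
  have hx : Tendsto (fun x : ℝ => (x : ℂ)) (𝓝[>] 0) (𝓝 0) :=
    (Complex.continuous_ofReal.tendsto' 0 0 Complex.ofReal_zero).mono_left nhdsWithin_le_nhds
  have hlim := (hx.mul (tendsto_slope_normalizedConicalCoordinate hb hmeas hv)).add_const 1
  rw [zero_mul, zero_add] at hlim
  refine hlim.congr' ?_
  filter_upwards [self_mem_nhdsWithin] with x hx
  have hx : (x : ℂ) ≠ 0 := Complex.ofReal_ne_zero.2 (ne_of_gt hx)
  rw [mul_inv_cancel_left₀ hx, sub_add_cancel]

lemma eventually_im_add_arg_normalizedConicalCoordinate_mem_Ioo (hb : -1 < b)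
    (hmeas : StronglyMeasurableAtFilter v (𝓝[>] 0)) (hv : HasDerivWithinAt v v' (Ioi 0) 0)
    (hIm : |(v 0).im| < 2 * π) :
    ∀ᶠ x in 𝓝[>] 0, (-v 0 / 2).im + (normalizedConicalCoordinate v b x).arg ∈ Ioo (-π) π := by
  refine eventually_add_arg_mem_Ioo ?_ (tendsto_normalizedConicalCoordinate hb hmeas hv)
  rw [Complex.div_ofNat_im, Complex.neg_im, abs_div, abs_neg, abs_two]
  linarith

lemma eventually_conicalCoordinate_mem_slitPlane (hb : -1 < b)
    (hmeas : StronglyMeasurableAtFilter v (𝓝[>] 0)) (hv : HasDerivWithinAt v v' (Ioi 0) 0)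
    (hIm : |(v 0).im| < 2 * π) :
    ∀ᶠ x in 𝓝[>] 0, conicalCoordinate v b x ∈ slitPlane := by
  filter_upwards [self_mem_nhdsWithin,
    (tendsto_normalizedConicalCoordinate hb hmeas hv).eventually_ne one_ne_zero,
    eventually_im_add_arg_normalizedConicalCoordinate_mem_Ioo hb hmeas hv hIm] with x hx hne harg
  exact conicalCoordinate_mem_slitPlane (by linarith) hx hne harg

lemma tendsto_exp_mul_conicalCoordinate_cpow_sub_inv (hb : -1 < b)
    (hmeas : StronglyMeasurableAtFilter v (𝓝[>] 0)) (hv : HasDerivWithinAt v v' (Ioi 0) 0)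
    (hIm : |(v 0).im| < 2 * π) :
    Tendsto (fun x : ℝ => Complex.exp (v 0 / 2 * (-(b + 1)⁻¹ : ℝ)) *
        (((b + 1 : ℝ) : ℂ) * conicalCoordinate v b x) ^ ((-(b + 1)⁻¹ : ℝ) : ℂ) - (x : ℂ)⁻¹)
      (𝓝[>] 0) (𝓝 (v' / (2 * ((b : ℂ) + 2)))) := by
  have hb1 : b + 1 ≠ 0 := by linarith
  have hN := tendsto_normalizedConicalCoordinate hb hmeas hv
  have hlimit : ((-(b + 1)⁻¹ : ℝ) : ℂ) * -(((b + 1) / (b + 2) : ℝ) * (v' / 2)) =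
      v' / (2 * ((b : ℂ) + 2)) := by
    have hb1' : (b : ℂ) + 1 ≠ 0 := by exact_mod_cast hb1
    push_cast
    field_simp
  rw [← hlimit]
  refine (tendsto_slope_cpow_const hN (tendsto_slope_normalizedConicalCoordinate hb hmeas hv)
    _).congr' ?_
  filter_upwards [self_mem_nhdsWithin, hN.eventually_ne one_ne_zero,
    eventually_im_add_arg_normalizedConicalCoordinate_mem_Ioo hb hmeas hv hIm] with x hx hne harg
  rw [exp_mul_conicalCoordinate_cpow hb1 hx hne (Ioo_subset_Ioc_self harg), mul_sub, mul_one]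

end ConicalCoordinate

lemma stronglyMeasurableAtFilter_comp_ofReal {u : ℂ → ℂ} {s : Set ℂ} {a : ℝ}
    (hu : ContinuousOn u s) (hs : IsOpen s) (ha : (a : ℂ) ∈ s) :
    StronglyMeasurableAtFilter (fun x : ℝ => u x) (𝓝[>] a) := by
  have hcont := hu.comp continuous_ofReal.continuousOn (mapsTo_preimage _ s)
  exact (hcont.stronglyMeasurableAtFilter (hs.preimage continuous_ofReal) a ha).filter_mono
    nhdsWithin_le_nhds

/-- Here `v` is the restriction of `u` to the positive ray. The bound on `Im v(0)` keeps
`e ^ {-v(0)/2}`, the direction in which `ξ` leaves the origin, off the branch cut. -/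
theorem conical_coordinate_inverse_expansion_general
    (v : ℝ → ℂ) (v' : ℂ) (hv : HasDerivWithinAt v v' (Set.Ioi 0) 0)
    (hmeas : StronglyMeasurableAtFilter v (𝓝[>] 0))
    (b : ℝ) (hb : -1 < b) (β : ℝ) (hβ : β = 2 * π * (1 + b))
    (hIm : |(v 0).im| < 2 * π)
    (ξ : ℝ → ℂ)
    (hξ : ∀ x : ℝ, 0 < x → ξ x = ∫ t in (0:ℝ)..1,
      ((t : ℂ) * (x : ℂ)) ^ (b : ℂ) * Complex.exp (-v (t * x) / 2) * (x : ℂ)) :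
    (∀ᶠ x in 𝓝[>] (0:ℝ), ξ x ∈ Complex.slitPlane) ∧
    Tendsto
      (fun x : ℝ =>
        Complex.exp (-v 0 * (π : ℂ) / (β : ℂ)) *
          ((β : ℂ) * ξ x / (2 * (π : ℂ))) ^ ((-(2 * π / β) : ℝ) : ℂ)
          - 1 / (x : ℂ))
      (𝓝[>] (0:ℝ)) (𝓝 (v' / (2 * ((b : ℂ) + 2)))) := by
  have hb1 : b + 1 ≠ 0 := by linarith
  have hscale : (β : ℂ) = 2 * π * (b + 1 : ℝ) := by rw [hβ]; push_cast; ring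
  have hpower : 2 * π / β = (b + 1)⁻¹ := by rw [hβ, add_comm 1 b]; field_simp
  have hfactor : -v 0 * (π : ℂ) / (β : ℂ) = v 0 / 2 * (-(b + 1)⁻¹ : ℝ) := by
    rw [← hpower]; push_cast; ring
  have hcoord : ∀ᶠ x in 𝓝[>] (0 : ℝ), conicalCoordinate v b x = ξ x := by
    filter_upwards [self_mem_nhdsWithin] with x hx
    rw [hξ x hx, integral_eq_conicalCoordinate v b (le_of_lt hx)]
  constructor
  · filter_upwards [hcoord, eventually_conicalCoordinate_mem_slitPlane hb hmeas hv hIm]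
      with x hx hmem
    exact hx ▸ hmem
  · refine (tendsto_exp_mul_conicalCoordinate_cpow_sub_inv hb hmeas hv hIm).congr' ?_
    filter_upwards [hcoord] with x hx
    have hpi : (2 * π : ℂ) ≠ 0 := by exact_mod_cast two_pi_pos.ne'
    rw [hx, hfactor, hpower, hscale, mul_assoc, mul_div_cancel_left₀ _ hpi, one_div]

/-- Asymptotics of the inverse of the distinguished conical coordinate along the
positive real axis: assuming `Im u(0) = 0`, one has `ξ(x) ∉ (-∞,0]` for small `x > 0` and
`1/x = e^{-u(0)π/β} (β ξ(x)/(2π))^{-2π/β} - u'(0)/(2(b+2)) + o(1)` as `x → 0⁺`. -/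
theorem conical_coordinate_inverse_expansion
    (R : ℝ) (hR : 0 < R) (u : ℂ → ℂ) (hu : DifferentiableOn ℂ u (Metric.ball 0 R))
    (b : ℝ) (hb : -1 < b) (β : ℝ) (hβ : β = 2 * π * (1 + b))
    (hIm : (u 0).im = 0)
    (ξ : ℝ → ℂ)
    (hξ : ∀ x : ℝ, ξ x = ∫ t in (0:ℝ)..1,
      ((t : ℂ) * (x : ℂ)) ^ (b : ℂ) * Complex.exp (-u ((t : ℂ) * (x : ℂ)) / 2) * (x : ℂ)) :
    (∀ᶠ x in nhdsWithin (0:ℝ) (Set.Ioi 0), ξ x ∈ Complex.slitPlane) ∧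
    Tendsto
      (fun x : ℝ =>
        Complex.exp (-u 0 * (π : ℂ) / (β : ℂ)) *
          ((β : ℂ) * ξ x / (2 * (π : ℂ))) ^ ((-(2 * π / β) : ℝ) : ℂ)
          - 1 / (x : ℂ))
      (nhdsWithin (0:ℝ) (Set.Ioi 0))
      (nhds (deriv u 0 / (2 * ((b : ℂ) + 2)))) := by
  have h0 : ((0 : ℝ) : ℂ) ∈ Metric.ball 0 R := by simpa using hR
  have hdiff : DifferentiableAt ℂ u 0 := hu.differentiableAt (Metric.ball_mem_nhds 0 hR)
  exact conical_coordinate_inverse_expansion_general (fun x => u x) (deriv u 0)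
    (hdiff.hasDerivAt.comp_ofReal (z := 0)).hasDerivWithinAt
    (stronglyMeasurableAtFilter_comp_ofReal hu.continuousOn Metric.isOpen_ball h0)
    b hb β hβ (by simp [hIm, pi_pos]) ξ fun x _ => by simpa using hξ x
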